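/- Let β < 0 and let f be a non-constant unbounded solution of equation (1) on [t₀, ∞) satisfying condition (2), such that f is positive at infinity (i.e. f(t) > 0 for all sufficiently large t). Then f'(t)·f(t)^{−β} converges as t → ∞ to a finite limit l₀ with l₀ > 0. -/

import Mathlib

open Set Filter Topology

lemma aux_mono {T : ℝ} {g g' : ℝ → ℝ} (h : ∀ t ∈ Ici T, HasDerivAt g (g' t) t)
    (h0 : ∀ t ∈ Ici T, 0 ≤ g' t) : MonotoneOn g (Ici T) := by
  apply monotoneOn_of_deriv_nonneg (convex_Ici T)
  · intro t ht; exact (h t ht).continuousAt.continuousWithinAt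
  · intro t ht; rw [interior_Ici] at ht
    exact (h t (mem_Ici.2 (le_of_lt ht))).differentiableAt.differentiableWithinAt
  · intro t ht; rw [interior_Ici] at ht
    rw [(h t (mem_Ici.2 (le_of_lt ht))).deriv]; exact h0 t (mem_Ici.2 (le_of_lt ht))

lemma aux_anti {T : ℝ} {g g' : ℝ → ℝ} (h : ∀ t ∈ Ici T, HasDerivAt g (g' t) t)
    (h0 : ∀ t ∈ Ici T, g' t ≤ 0) : AntitoneOn g (Ici T) := by
  have := aux_mono (g := fun t => - g t) (g' := fun t => - g' t)
    (fun t ht => (h t ht).neg) (fun t ht => by have := h0 t ht; linarith)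
  intro x hx y hy hxy
  have := this hx hy hxy
  simp only at this; linarith

lemma aux_prim {T : ℝ} {g : ℝ → ℝ} (h : ContinuousOn g (Ici T)) :
    ∃ F : ℝ → ℝ, ∀ t ∈ Ici T, HasDerivAt F (g t) t := by
  have hc : Continuous (fun t => g (max t T)) :=
    h.comp_continuous (by fun_prop) (fun t => mem_Ici.2 (le_max_right _ _))
  refine ⟨fun t => ∫ x in T..t, g (max x T), fun t ht => ?_⟩
  have := (hc.integral_hasStrictDerivAt T t).hasDerivAt
  rwa [max_eq_left ht] at this

lemma aux_sign (β : ℝ) (hβ : β < 0) (t₀ : ℝ)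
    (f f' f'' f''' : ℝ → ℝ)
    (hf1 : ∀ t ∈ Set.Ici t₀, HasDerivAt f (f' t) t)
    (hf2 : ∀ t ∈ Set.Ici t₀, HasDerivAt f' (f'' t) t)
    (hf3 : ∀ t ∈ Set.Ici t₀, HasDerivAt f'' (f''' t) t)
    (heq : ∀ t ∈ Set.Ici t₀, f''' t + f t * f'' t - β * (f' t) ^ 2 = 0)
    (hunb : ¬ ∃ M : ℝ, ∀ t ∈ Set.Ici t₀, |f t| ≤ M)
    (hlim : Filter.Tendsto f' Filter.atTop (nhds 0))
    (hposinf : ∀ᶠ t in Filter.atTop, 0 < f t) :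
    ∃ t₁ ≥ t₀, ∀ t ≥ t₁, f'' t < 0 ∧ 0 < f' t := by
  have h1 : ∃ t₁ ≥ t₀, f'' t₁ < 0 := by
    by_contra! hcon
    have hm := aux_mono hf2 (fun t ht => hcon t ht)
    have hle : ∀ t ∈ Ici t₀, f' t ≤ 0 := by
      intro t ht
      refine ge_of_tendsto hlim ?_
      filter_upwards [eventually_ge_atTop t] with s hs
      exact hm ht (le_trans ht hs) hs
    have ha := aux_anti hf1 hle
    apply hunb
    refine ⟨f t₀, fun t ht => ?_⟩
    have h2 := ha (self_mem_Ici) ht ht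
    obtain ⟨s, hs1, hs2⟩ := (hposinf.and (eventually_ge_atTop t)).exists
    have h3 := ha ht (le_trans ht hs2) hs2
    rw [abs_of_pos (by linarith)]; exact h2
  obtain ⟨t₁, ht₁, hneg⟩ := h1
  obtain ⟨F, hF⟩ := aux_prim (T := t₀) (g := f)
    (fun t ht => (hf1 t ht).continuousAt.continuousWithinAt)
  have hanti := aux_anti (T := t₀) (g := fun t => f'' t * Real.exp (F t))
    (fun t ht => (hf3 t ht).mul (hF t ht).exp) (fun t ht => by
      have h4 : f''' t = - f t * f'' t + β * (f' t)^2 := by linarith [heq t ht]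
      rw [h4]
      have : (- f t * f'' t + β * (f' t)^2) * Real.exp (F t) + f'' t * (Real.exp (F t) * f t)
        = β * ((f' t)^2 * Real.exp (F t)) := by ring
      rw [this]
      exact mul_nonpos_of_nonpos_of_nonneg hβ.le (by positivity))
  have hneg2 : ∀ t ≥ t₁, f'' t < 0 := by
    intro t ht
    have h5 := hanti (show t₁ ∈ Ici t₀ from ht₁) (show t ∈ Ici t₀ from le_trans ht₁ ht) ht
    simp only at h5
    have h6 : f'' t₁ * Real.exp (F t₁) < 0 := mul_neg_of_neg_of_pos hneg (Real.exp_pos _)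
    by_contra! h7
    have := mul_nonneg h7 (Real.exp_pos (F t)).le
    linarith
  have hsa : StrictAntiOn f' (Ici t₁) := by
    apply strictAntiOn_of_deriv_neg (convex_Ici _)
    · intro t ht; exact (hf2 t (le_trans ht₁ ht)).continuousAt.continuousWithinAt
    · intro t ht; rw [interior_Ici] at ht
      rw [(hf2 t (le_trans ht₁ (le_of_lt ht))).deriv]; exact hneg2 t (le_of_lt ht)
  refine ⟨t₁, ht₁, fun t ht => ⟨hneg2 t ht, ?_⟩⟩
  have h8 : f' (t+1) < f' t := hsa (show t ∈ Ici t₁ from ht) (show t₁ ≤ t + 1 by linarith) (by linarith)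
  have h9 : 0 ≤ f' (t+1) := by
    refine le_of_tendsto hlim ?_
    filter_upwards [eventually_ge_atTop (t+1)] with s hs
    exact hsa.antitoneOn (show t₁ ≤ t + 1 by linarith) (show t₁ ≤ s by linarith) hs
  linarith

lemma aux_top (t₀ t₁ : ℝ) (h01 : t₀ ≤ t₁) (f f' : ℝ → ℝ)
    (hf1 : ∀ t ∈ Set.Ici t₀, HasDerivAt f (f' t) t)
    (hunb : ¬ ∃ M : ℝ, ∀ t ∈ Set.Ici t₀, |f t| ≤ M)
    (hp : ∀ t ≥ t₁, 0 < f' t) : Tendsto f atTop atTop := by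
  have hm : MonotoneOn f (Ici t₁) :=
    aux_mono (fun t ht => hf1 t (le_trans h01 ht)) (fun t ht => (hp t ht).le)
  rw [tendsto_atTop]
  intro M
  have : ∃ t ≥ t₁, M ≤ f t := by
    by_contra! hcon
    apply hunb
    obtain ⟨K, hK⟩ := (isCompact_Icc (a := t₀) (b := t₁)).exists_bound_of_continuousOn (f := f)
      (fun t ht => (hf1 t ht.1).continuousAt.continuousWithinAt)
    refine ⟨max K (max |f t₁| |M|), fun t ht => ?_⟩
    rcases le_total t t₁ with h | h
    · exact le_max_of_le_left (hK t ⟨ht, h⟩)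
    · apply le_max_of_le_right
      have h1 := hm self_mem_Ici h h
      have h2 := hcon t h
      exact abs_le_max_abs_abs h1 h2.le
  obtain ⟨t, ht, hM⟩ := this
  filter_upwards [eventually_ge_atTop t] with s hs
  exact hM.trans (hm ht (le_trans ht hs) hs)

lemma aux_trap (b : ℝ) (T : ℝ)
    (f f' f'' f''' : ℝ → ℝ)
    (hf1 : ∀ t ∈ Set.Ici T, HasDerivAt f (f' t) t)
    (hf2 : ∀ t ∈ Set.Ici T, HasDerivAt f' (f'' t) t)
    (hf3 : ∀ t ∈ Set.Ici T, HasDerivAt f'' (f''' t) t)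
    (heq : ∀ t ∈ Set.Ici T, f''' t = - f t * f'' t - b * (f' t) ^ 2)
    (hp : ∀ t ∈ Ici T, 0 < f' t)
    (hbig : ∀ t ∈ Ici T, 4 ≤ f t) (hsm : ∀ t ∈ Ici T, b * f' t ≤ 1)
    (htop : Tendsto f atTop atTop) :
    ∃ t₂ ≥ T, ∀ t ≥ t₂, - f' t ≤ f'' t := by
  have h1 : ∃ t₂ ≥ T, 0 ≤ f'' t₂ + f' t₂ := by
    by_contra! hcon
    have ha := aux_anti (T := T) (g := fun t => f' t + f t)
      (fun t ht => (hf2 t ht).add (hf1 t ht)) (fun t ht => (hcon t ht).le)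
    obtain ⟨s, hs1, hs2⟩ := ((tendsto_atTop.1 htop (f' T + f T)).and (eventually_ge_atTop T)).exists
    have h2 := ha self_mem_Ici hs2 hs2
    simp only at h2
    linarith [hp s hs2]
  obtain ⟨t₂, ht₂, hs⟩ := h1
  refine ⟨t₂, ht₂, fun t ht => ?_⟩
  have key := image_le_of_deriv_right_lt_deriv_boundary (a := t₂) (b := t)
    (f := fun t => - (f'' t + f' t)) (f' := fun t => -(f''' t + f'' t))
    (B := fun _ => 0) (B' := fun _ => 0)
    (fun s hs => (((hf3 s (le_trans ht₂ hs.1)).add (hf2 s (le_trans ht₂ hs.1))).neg).continuousAt.continuousWithinAt)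
    (fun s hs => (((hf3 s (le_trans ht₂ hs.1)).add (hf2 s (le_trans ht₂ hs.1))).neg).hasDerivWithinAt)
    (by linarith) (fun s => hasDerivAt_const s 0)
    (fun s hs h0 => by
      have hT : s ∈ Ici T := le_trans ht₂ hs.1
      have e : f'' s = - f' s := by linarith
      rw [heq s hT, e]
      nlinarith [hp s hT, hbig s hT, hsm s hT,
        mul_pos (hp s hT) (show 0 < f s - 1 - b * f' s by linarith [hbig s hT, hsm s hT])])
    (show t ∈ Icc t₂ t from ⟨ht, le_rfl⟩)
  linarith

lemma aux_final (b : ℝ) (T : ℝ)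
    (f f' f'' f''' : ℝ → ℝ)
    (hf1 : ∀ t ∈ Set.Ici T, HasDerivAt f (f' t) t)
    (hf2 : ∀ t ∈ Set.Ici T, HasDerivAt f' (f'' t) t)
    (hf3 : ∀ t ∈ Set.Ici T, HasDerivAt f'' (f''' t) t)
    (heq : ∀ t ∈ Set.Ici T, f''' t = - f t * f'' t - b * (f' t) ^ 2)
    (hp : ∀ t ∈ Ici T, 0 < f' t) (hn : ∀ t ∈ Ici T, f'' t < 0)
    (hbig : ∀ t ∈ Ici T, 4 ≤ f t)
    (hs : ∀ t ∈ Ici T, - f' t ≤ f'' t)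
    (htop : Tendsto f atTop atTop) :
    ∃ l₀ > 0, Filter.Tendsto (fun t => f' t * (f t) ^ b) Filter.atTop (nhds l₀) := by
  set c : ℝ := 2 * |b - 1| with hc
  have hc0 : 0 ≤ c := by positivity
  let A : ℝ → ℝ := fun t => f'' t + f t * f' t
  have hA : ∀ t ∈ Ici T, f t * f' t / 2 ≤ A t := by
    intro t ht
    have := mul_le_mul_of_nonneg_right (hbig t ht) (hp t ht).le
    simp only [A]; nlinarith [hs t ht, hp t ht]
  have hff : ∀ t ∈ Ici T, 0 < f t * f' t := fun t ht =>
    mul_pos (by linarith [hbig t ht]) (hp t ht)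
  have hA0 : ∀ t ∈ Ici T, 0 < A t := fun t ht => by linarith [hA t ht, hff t ht]
  let L : ℝ → ℝ := fun t => (b - 1) * Real.log (f t) + Real.log (A t)
  have hAd : ∀ t ∈ Ici T, HasDerivAt A ((1 - b) * f' t ^ 2) t := by
    intro t ht
    refine ((hf3 t ht).add ((hf1 t ht).mul (hf2 t ht))).congr_deriv ?_
    rw [heq t ht]; ring
  have hL : ∀ t ∈ Ici T, HasDerivAt L ((b - 1) * (f'' t * f' t / (f t * A t))) t := by
    intro t ht
    have hf0 : f t ≠ 0 := by linarith [hbig t ht]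
    refine ((((hf1 t ht).log hf0).const_mul (b-1)).add ((hAd t ht).log (hA0 t ht).ne')).congr_deriv ?_
    have := (hA0 t ht).ne'
    field_simp
    simp only [A]; ring
  have hI : ∀ t ∈ Ici T, HasDerivAt (fun t => c * (f t)⁻¹) (c * (- f' t / f t ^ 2)) t := by
    intro t ht
    have hf0 : f t ≠ 0 := by linarith [hbig t ht]
    exact ((hf1 t ht).inv hf0).const_mul c
  have hbd : ∀ t ∈ Ici T, |(b - 1) * (f'' t * f' t / (f t * A t))| ≤ c * (f' t / f t ^ 2) := by
    intro t ht
    have hf0 : 0 < f t := by linarith [hbig t ht]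
    have hp0 := hp t ht
    rw [abs_mul, hc, mul_comm 2, mul_assoc]
    apply mul_le_mul_of_nonneg_left _ (abs_nonneg _)
    rw [abs_div, abs_mul, abs_of_pos hp0, abs_of_pos (mul_pos hf0 (hA0 t ht)), abs_of_neg (hn t ht)]
    have h1 : - f'' t * f' t ≤ f' t * f' t := by
      apply mul_le_mul_of_nonneg_right _ hp0.le; linarith [hs t ht]
    have h2 : f t * (f t * f' t / 2) ≤ f t * A t := mul_le_mul_of_nonneg_left (hA t ht) hf0.le
    calc _ ≤ f' t * f' t / (f t * (f t * f' t / 2)) := by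
            apply div_le_div₀ (by positivity) h1 (by positivity) h2
      _ = _ := by field_simp
  have hP : AntitoneOn (fun t => L t + c * (f t)⁻¹) (Ici T) := by
    apply aux_anti (fun t ht => (hL t ht).add (hI t ht))
    intro t ht
    have := (abs_le.1 (hbd t ht)).2
    rw [neg_div, mul_neg]; linarith
  have hQ : MonotoneOn (fun t => L t - c * (f t)⁻¹) (Ici T) := by
    apply aux_mono (fun t ht => (hL t ht).sub (hI t ht))
    intro t ht
    have := (abs_le.1 (hbd t ht)).1
    rw [neg_div, mul_neg]; linarith
  have hinv : Tendsto (fun t => (f t)⁻¹) atTop (𝓝 0) := tendsto_inv_atTop_zero.comp htop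
  have hPl : ∃ p, Tendsto (fun t => L t + c * (f t)⁻¹) atTop (𝓝 p) := by
    have hanti : Antitone (fun t => L (max t T) + c * (f (max t T))⁻¹) := by
      intro x y hxy
      exact hP (mem_Ici.2 (le_max_right _ _)) (mem_Ici.2 (le_max_right _ _)) (max_le_max_right T hxy)
    have hbdd : BddBelow (range (fun t => L (max t T) + c * (f (max t T))⁻¹)) := by
      refine ⟨L T - c * (f T)⁻¹, ?_⟩
      rintro _ ⟨t, rfl⟩
      have h1 := hQ self_mem_Ici (le_max_right t T) (le_max_right t T)
      have h2 : 0 ≤ (f (max t T))⁻¹ := by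
        have := hbig _ (le_max_right t T); positivity
      have h3 := mul_nonneg hc0 h2
      simp only at h1 ⊢; linarith
    refine ⟨_, (tendsto_atTop_ciInf hanti hbdd).congr' ?_⟩
    filter_upwards [eventually_ge_atTop T] with t ht
    rw [max_eq_left ht]
  obtain ⟨p, hpl⟩ := hPl
  have hLl : Tendsto L atTop (𝓝 p) := by
    have := hpl.sub (hinv.const_mul c)
    simpa using this
  have hr : Tendsto (fun t => 1 + f'' t / (f t * f' t)) atTop (𝓝 1) := by
    have : Tendsto (fun t => f'' t / (f t * f' t)) atTop (𝓝 0) := by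
      refine tendsto_of_tendsto_of_tendsto_of_le_of_le' (g := fun t => -(f t)⁻¹) (h := fun _ => 0)
        (by simpa using hinv.neg) tendsto_const_nhds ?_ ?_
      · filter_upwards [eventually_ge_atTop T] with t ht
        rw [le_div_iff₀ (hff t ht)]
        have hf0 : f t ≠ 0 := by linarith [hbig t ht]
        have : -(f t)⁻¹ * (f t * f' t) = - f' t := by field_simp
        rw [this]; exact hs t ht
      · filter_upwards [eventually_ge_atTop T] with t ht
        exact div_nonpos_of_nonpos_of_nonneg (hn t ht).le (hff t ht).le
    simpa using this.const_add 1
  refine ⟨Real.exp p, Real.exp_pos p, ?_⟩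
  have hfin := ((Real.continuous_exp.tendsto p).comp hLl).div hr one_ne_zero
  rw [div_one] at hfin
  refine hfin.congr' ?_
  filter_upwards [eventually_ge_atTop T] with t ht
  have hf0 : 0 < f t := by linarith [hbig t ht]
  have hp0 := hp t ht
  have hr2 : 1 + f'' t / (f t * f' t) = A t / (f t * f' t) := by
    simp only [A]; field_simp; ring
  have hE : Real.exp (L t) = f t ^ b / f t * A t := by
    simp only [L]
    rw [Real.exp_add, Real.exp_log (hA0 t ht), mul_comm (b-1), ← Real.rpow_def_of_pos hf0,
      Real.rpow_sub_one hf0.ne']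
  have := (hA0 t ht).ne'
  simp only [Pi.div_apply, Function.comp]
  rw [hr2, hE]
  field_simp


/-- Let β < 0 and f be a non-constant unbounded solution of
f''' + f·f'' − β·(f')² = 0 on [t₀, ∞) with f'(t) → 0 at infinity and f positive
at infinity.  Then f'(t)·f(t)^{−β} converges to a finite positive limit l₀. -/
theorem stmt_10 (β : ℝ) (hβ : β < 0) (t₀ : ℝ)
    (f f' f'' f''' : ℝ → ℝ)
    (hf1 : ∀ t ∈ Set.Ici t₀, HasDerivAt f (f' t) t)
    (hf2 : ∀ t ∈ Set.Ici t₀, HasDerivAt f' (f'' t) t)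
    (hf3 : ∀ t ∈ Set.Ici t₀, HasDerivAt f'' (f''' t) t)
    (heq : ∀ t ∈ Set.Ici t₀, f''' t + f t * f'' t - β * (f' t) ^ 2 = 0)
    (hnc : ¬ ∃ c : ℝ, ∀ t ∈ Set.Ici t₀, f t = c)
    (hunb : ¬ ∃ M : ℝ, ∀ t ∈ Set.Ici t₀, |f t| ≤ M)
    (hlim : Filter.Tendsto f' Filter.atTop (nhds 0))
    (hposinf : ∀ᶠ t in Filter.atTop, 0 < f t) :
    ∃ l₀ > 0, Filter.Tendsto (fun t => f' t * (f t) ^ (-β))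
      Filter.atTop (nhds l₀) := by

  obtain ⟨t₁, h01, hsg⟩ := aux_sign β hβ t₀ f f' f'' f''' hf1 hf2 hf3 heq hunb hlim hposinf
  have htop := aux_top t₀ t₁ h01 f f' hf1 hunb (fun t ht => (hsg t ht).2)
  have hsm : ∀ᶠ t in Filter.atTop, (-β) * f' t ≤ 1 := by
    have h := hlim.const_mul (-β)
    rw [mul_zero] at h
    exact h.eventually (eventually_le_nhds one_pos)
  obtain ⟨T, hT⟩ := Filter.eventually_atTop.1
    (((Filter.tendsto_atTop.1 htop 4).and hsm).and (Filter.eventually_ge_atTop t₁))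
  have hge : ∀ t ≥ T, t₀ ≤ t := fun t ht => le_trans h01 (hT t ht).2
  have heq2 : ∀ t ≥ T, f''' t = - f t * f'' t - (-β) * (f' t) ^ 2 := fun t ht => by
    linarith [heq t (hge t ht)]
  obtain ⟨t₂, ht₂, htr⟩ := aux_trap (-β) T f f' f'' f''' (fun t ht => hf1 t (hge t ht))
    (fun t ht => hf2 t (hge t ht)) (fun t ht => hf3 t (hge t ht)) heq2
    (fun t ht => (hsg t (hT t ht).2).2) (fun t ht => (hT t ht).1.1) (fun t ht => (hT t ht).1.2) htop
  have hge2 : ∀ t ≥ t₂, t ≥ T := fun t ht => le_trans ht₂ ht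
  exact aux_final (-β) t₂ f f' f'' f''' (fun t ht => hf1 t (hge t (hge2 t ht)))
    (fun t ht => hf2 t (hge t (hge2 t ht))) (fun t ht => hf3 t (hge t (hge2 t ht)))
    (fun t ht => heq2 t (hge2 t ht))
    (fun t ht => (hsg t (hT t (hge2 t ht)).2).2) (fun t ht => (hsg t (hT t (hge2 t ht)).2).1)
    (fun t ht => (hT t (hge2 t ht)).1.1) htr htop
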